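/- Let X be an involutive BE algebra satisfying property (QW1): x→(x∧y) = x→y for all x, y ∈ X. Then (x∧y)∧(z∧x) = y∧(z∧x) holds for all x, y, z ∈ X. -/

import Mathlib

/-- A bounded involutive BE algebra. -/
class InvBE (X : Type*) where
  imp : X → X → X
  one : X
  zero : X
  be1 : ∀ x : X, imp x x = one
  be2 : ∀ x : X, imp x one = one
  be3 : ∀ x : X, imp one x = x
  be4 : ∀ x y z : X, imp x (imp y z) = imp y (imp x z)
  bound : ∀ x : X, imp zero x = one
  dn : ∀ x : X, imp (imp x zero) zero = x

namespace InvBE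

variable {X : Type*} [InvBE X]

/-- Negation: `x* = x → 0`. -/
def neg (x : X) : X := imp x zero

/-- `x ∨ y = (x → y) → y`. -/
def sup (x y : X) : X := imp (imp x y) y

/-- `x ∧ y = ((x* → y*) → y*)*`. -/
def inf (x y : X) : X := neg (imp (imp (neg x) (neg y)) (neg y))

/-- `x ≤ y` iff `x → y = 1`. -/
def le (x y : X) : Prop := imp x y = one

/-- `x ≤_Q y` iff `x = x ∧ y`. -/
def leQ (x y : X) : Prop := x = inf x y

end InvBE

/-!
In an involutive BE algebra `(c → x*)*` acts as a product of `c` and `x`: it satisfies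
`(c → x*)* → u = c → (x → u)`. As `z ∧ x` is such a product, `(z ∧ x) → u` depends on `u` only
through `x → u`. By contraposition `u ∧ w` depends on `u` only through `w → u`. Hence
`u ∧ (z ∧ x)` depends on `u` only through `x → u`, and (QW1) says that `u = x ∧ y` and `u = y` agree
there.
-/

namespace InvBE

variable {X : Type*} [InvBE X]

protected theorem neg_neg (x : X) : neg (neg x) = x :=
  dn x

theorem imp_neg_comm (x y : X) : imp x (neg y) = imp y (neg x) :=
  be4 x y zero

theorem imp_neg_neg (x y : X) : imp (neg x) (neg y) = imp y x := by
  rw [imp_neg_comm, InvBE.neg_neg]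

theorem neg_imp_neg_imp (c x u : X) : imp (neg (imp c (neg x))) u = imp c (imp x u) :=
  calc
    imp (neg (imp c (neg x))) u = imp (neg u) (imp c (neg x)) := by
      rw [← imp_neg_neg, InvBE.neg_neg]
    _ = imp c (imp (neg u) (neg x)) := be4 _ _ _
    _ = imp c (imp x u) := by rw [imp_neg_neg]

theorem inf_eq_neg_imp_imp_neg (u w : X) : inf u w = neg (imp (imp w u) (neg w)) := by
  rw [inf, imp_neg_neg]

theorem inf_imp (z x u : X) : imp (inf z x) u = imp (imp x z) (imp x u) := by
  rw [inf_eq_neg_imp_imp_neg, neg_imp_neg_imp]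

theorem inf_inf_congr_of_imp_eq {x u v : X} (h : imp x u = imp x v) (z : X) :
    inf u (inf z x) = inf v (inf z x) := by
  have imp_eq : imp (inf z x) u = imp (inf z x) v := by rw [inf_imp, inf_imp, h]
  rw [inf_eq_neg_imp_imp_neg u, inf_eq_neg_imp_imp_neg v, imp_eq]

end InvBE

open InvBE in
theorem stmt_3 {X : Type*} [InvBE X]
    (qw1 : ∀ x y : X, imp x (inf x y) = imp x y) :
    ∀ x y z : X, inf (inf x y) (inf z x) = inf y (inf z x) := by
  intro x y z
  exact inf_inf_congr_of_imp_eq (qw1 x y) z
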